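/- arXiv:1010.1890 — 9 statements merged into one kernel-verified Lean document; each statement's English description precedes it below -/
import Mathlib

section
/- Let f be a polynomial in ℤ[x] and let m ≥ 1 be an integer. Then the sum over ℓ from 0 to m of (ℓ - 1)·D_ℓ(f)·D_{m-ℓ}(f^{m-1}) equals 0, where D_ℓ denotes the ℓ-th Hasse (divided-power) derivative. (Here the coefficient ℓ - 1 is taken in ℤ, so the ℓ = 0 term contributes -f·D_m(f^{m-1}) and the ℓ = 1 term contributes 0.) -/
open Polynomial

/-- For `f ∈ ℤ[x]` and `m ≥ 1`,
`∑_{ℓ=0}^{m} (ℓ - 1) · D_ℓ(f) · D_{m-ℓ}(f^{m-1}) = 0`,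
where `D_ℓ` is the `ℓ`-th Hasse derivative. -/
theorem key_identity_int (f : Polynomial ℤ) (m : ℕ) (hm : 1 ≤ m) :
    ∑ ℓ ∈ Finset.range (m + 1),
      C ((ℓ : ℤ) - 1) * hasseDeriv ℓ f * hasseDeriv (m - ℓ) (f ^ (m - 1)) = 0 := by
  apply Polynomial.funext
  intro r
  have hX : ∀ (p : Polynomial ℤ) (n : ℕ), (X * derivative p).coeff n = (n : ℤ) * p.coeff n := by
    intro p n
    cases n with
    | zero => simp
    | succ k =>
      rw [coeff_X_mul, coeff_derivative]
      push_cast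
      ring
  set g := taylor r f with hg
  have h1 : ((X * derivative g - g) * g ^ (m - 1)).coeff m = 0 := by
    have hm0 : (m : ℤ) ≠ 0 := by
      have : m ≠ 0 := by omega
      exact_mod_cast this
    have h2 : C (m : ℤ) * ((X * derivative g - g) * g ^ (m - 1))
        = X * derivative (g ^ m) - C (m : ℤ) * g ^ m := by
      have h3 : g ^ m = g * g ^ (m - 1) := by
        rw [← pow_succ']
        congr 1
        omega
      rw [derivative_pow, h3]
      simp only [map_natCast]
      ring
    have h4 := congrArg (fun p => coeff p m) h2
    simp only [coeff_C_mul, coeff_sub, hX, sub_self] at h4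
    exact (mul_eq_zero.mp h4).resolve_left hm0
  rw [coeff_mul, Finset.Nat.sum_antidiagonal_eq_sum_range_succ_mk] at h1
  rw [eval_finsetSum, eval_zero, ← h1]
  apply Finset.sum_congr rfl
  intro l _
  rw [eval_mul, eval_mul, eval_C, ← taylor_coeff, ← taylor_coeff, taylor_pow, coeff_sub, hX, ← hg]
  ring
end

section
/- Let A be a commutative ring of prime characteristic p, let f be a polynomial in A[x], and let m ≥ 1 be an integer. Then the sum over ℓ from 0 to m of (ℓ - 1)·D_ℓ(f)·D_{m-ℓ}(f^{m-1}) equals 0, where D_ℓ denotes the ℓ-th Hasse (divided-power) derivative and the coefficient ℓ - 1 is interpreted via the natural map ℤ → A. -/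
open Polynomial

/-- The coefficient identity over a domain of characteristic zero. -/
theorem coeff_identity_domain {R : Type*} [CommRing R] [IsDomain R] [CharZero R]
    (G : R[X]) (n : ℕ) :
    ((X * derivative G - G) * G ^ n).coeff (n + 1) = 0 := by
  have hn : ((n : R) + 1) ≠ 0 := by exact_mod_cast Nat.succ_ne_zero n
  have h1 : (derivative (G ^ (n + 1))).coeff n = (G ^ (n + 1)).coeff (n + 1) * ((n : R) + 1) :=
    coeff_derivative _ _
  rw [derivative_pow_succ, mul_assoc, ← Nat.cast_succ, coeff_C_mul] at h1
  have h2 : (X * derivative G - G) * G ^ n = X * (G ^ n * derivative G) - G ^ (n + 1) := by ring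
  rw [h2, coeff_sub, coeff_X_mul]
  apply mul_left_cancel₀ hn
  push_cast at h1
  linear_combination h1

/-- The coefficient identity over any commutative ring. -/
theorem coeff_identity {R : Type*} [CommRing R] (G : R[X]) (n : ℕ) :
    ((X * derivative G - G) * G ^ n).coeff (n + 1) = 0 := by
  let φ : MvPolynomial R ℤ →+* R := MvPolynomial.eval₂Hom (Int.castRingHom R) id
  have hφ : Function.Surjective φ := fun r => ⟨MvPolynomial.X r, by simp [φ]⟩
  obtain ⟨H, rfl⟩ := Polynomial.map_surjective φ hφ G
  have h := congrArg φ (coeff_identity_domain H n)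
  rw [← coeff_map] at h
  simpa [derivative_map] using h

theorem coeff_taylor_generic {A : Type*} [CommRing A] (f : A[X]) (n : ℕ) :
    (taylor (X : A[X]) (f.map C)).coeff n = hasseDeriv n f := by
  have h : hasseDeriv n (f.map C) = (hasseDeriv n f).map (C : A →+* A[X]) := by
    ext1 k
    simp [hasseDeriv_coeff]
  rw [taylor_coeff, h, eval_map, eval₂_C_X]

/-- For a commutative ring `A` of prime characteristic `p`, `f ∈ A[x]` and `m ≥ 1`,
`∑_{ℓ=0}^{m} (ℓ - 1) · D_ℓ(f) · D_{m-ℓ}(f^{m-1}) = 0`,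
where `D_ℓ` is the `ℓ`-th Hasse derivative and `ℓ - 1` is taken via `ℤ → A`. -/
theorem key_identity_charP (A : Type*) [CommRing A] (p : ℕ) [Fact p.Prime] [CharP A p]
    (f : Polynomial A) (m : ℕ) (hm : 1 ≤ m) :
    ∑ ℓ ∈ Finset.range (m + 1),
      C ((((ℓ : ℤ) - 1) : ℤ) : A) * hasseDeriv ℓ f * hasseDeriv (m - ℓ) (f ^ (m - 1)) = 0 := by
  obtain ⟨n, rfl⟩ : ∃ n, m = n + 1 := ⟨m - 1, by omega⟩
  have h := coeff_identity (taylor (X : A[X]) (f.map C)) n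
  rw [coeff_mul, Finset.Nat.sum_antidiagonal_eq_sum_range_succ_mk] at h
  rw [← h]
  refine Finset.sum_congr rfl fun l _ => ?_
  rw [← taylor_pow, ← Polynomial.map_pow, coeff_taylor_generic, Nat.add_sub_cancel]
  congr 1
  rw [coeff_sub, coeff_taylor_generic]
  cases l with
  | zero => simp
  | succ k =>
    rw [coeff_X_mul, coeff_derivative, coeff_taylor_generic]
    simp
    ring
end

section
/- Let k be a field of prime characteristic p, let e ≥ 1 be an integer, and let f ∈ k[x]. Then D_{p^e}(f^{p^e}) = (f')^{p^e}, where D_{p^e} is the p^e-th Hasse derivative and f' is the formal derivative of f. -/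
open Polynomial

/-- For a field `k` of prime characteristic `p`, `e ≥ 1` and `f ∈ k[x]`,
`D_{p^e}(f^{p^e}) = (f')^{p^e}`. -/
theorem hasseDeriv_pow_frobenius (k : Type*) [Field k] (p : ℕ) [Fact p.Prime] [CharP k p]
    (e : ℕ) (he : 1 ≤ e) (f : Polynomial k) :
    hasseDeriv (p ^ e) (f ^ (p ^ e)) = (derivative f) ^ (p ^ e) := by
  induction f using Polynomial.induction_on' with
  | add f g hf hg =>
    rw [add_pow_char_pow, map_add, hf, hg, map_add, add_pow_char_pow]
  | monomial n a =>
    have h : (((p ^ e * n).choose (p ^ e * 1) : ℕ) : k) = ((n.choose 1 : ℕ) : k) :=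
      (CharP.natCast_eq_natCast k p).2 Choose.choose_pow_mul_pow_mul_modEq_choose_nat
    have hn : ((n : k)) ^ p ^ e = n := by
      have := map_natCast (iterateFrobenius k p e) n
      rwa [iterateFrobenius_def] at this
    rw [mul_one, Nat.choose_one_right, mul_comm] at h
    rw [monomial_pow, hasseDeriv_monomial, derivative_monomial, monomial_pow, h, mul_pow, hn,
      mul_comm (n : k), Nat.sub_mul, one_mul]
end

section
/- Let A be a commutative ring of prime characteristic p, let e ≥ 1 be an integer, let g ∈ A[x], and let ℓ be an integer with 0 < ℓ < p^e. Then the ℓ-th Hasse derivative of g^{p^e} is zero: D_ℓ(g^{p^e}) = 0. -/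
open Polynomial

theorem choose_mul_prime_pow_cast (A : Type*) [CommRing A] (p : ℕ) [Fact p.Prime]
    [CharP A p] (e n ℓ : ℕ) (h0 : 0 < ℓ) (h1 : ℓ < p ^ e) :
    (((n * p ^ e).choose ℓ : ℕ) : A) = 0 := by
  have hp : 0 < p ^ e := pow_pos (Fact.out : p.Prime).pos e
  have h : ((X + 1 : A[X]) ^ (n * p ^ e)) = expand A (p ^ e) ((X + 1) ^ n) := by
    rw [mul_comm, pow_mul, add_pow_char_pow]
    simp
  have h2 := congrArg (fun f => coeff f ℓ) h
  simp only [coeff_X_add_one_pow, coeff_expand hp] at h2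
  rw [h2, if_neg]
  exact Nat.not_dvd_of_pos_of_lt h0 h1

/-- For a commutative ring `A` of prime characteristic `p`, `e ≥ 1`, `g ∈ A[x]` and
`0 < ℓ < p^e`, the `ℓ`-th Hasse derivative of `g^{p^e}` vanishes. -/
theorem hasseDeriv_pow_prime_pow_eq_zero (A : Type*) [CommRing A] (p : ℕ) [Fact p.Prime]
    [CharP A p] (e : ℕ) (he : 1 ≤ e) (g : Polynomial A) (ℓ : ℕ) (h0 : 0 < ℓ)
    (h1 : ℓ < p ^ e) :
    hasseDeriv ℓ (g ^ (p ^ e)) = 0 := by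
  induction g using Polynomial.induction_on' with
  | add f g hf hg => rw [add_pow_char_pow, map_add, hf, hg, add_zero]
  | monomial n r =>
    rw [monomial_pow, hasseDeriv_monomial, choose_mul_prime_pow_cast A p e n ℓ h0 h1, zero_mul,
      monomial_zero_right]
end

section
/- Let A be a commutative ring of prime characteristic p, let e ≥ 1 be an integer, and let t be an integer with 0 ≤ t < p^e. Then for all f, g ∈ A[x], the t-th Hasse derivative satisfies D_t(g^{p^e}·f) = g^{p^e}·D_t(f); that is, D_t is linear over the subring of p^e-th powers of A[x]. -/
open Polynomial

theorem hasseDeriv_X_pow_aux (A : Type*) [CommRing A] (p : ℕ) [Fact p.Prime] [CharP A p]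
    (e : ℕ) (t : ℕ) (ht : t < p ^ e) (f : Polynomial A) :
    hasseDeriv t ((X : Polynomial A) ^ (p ^ e) * f) = X ^ (p ^ e) * hasseDeriv t f := by
  rw [hasseDeriv_mul, Finset.sum_eq_single (0, t)]
  · simp
  · rintro ⟨i, j⟩ hij hne
    rw [Finset.HasAntidiagonal.mem_antidiagonal] at hij
    simp only at hij
    have hi : i ≠ 0 := by
      rintro rfl
      apply hne
      simp only [zero_add] at hij
      rw [hij]
    have hd : p ∣ (p ^ e).choose i :=
      (Fact.out : p.Prime).dvd_choose_pow hi (by omega)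
    have hz : (((p ^ e).choose i : ℕ) : A) = 0 := (CharP.cast_eq_zero_iff A p _).2 hd
    rw [← monomial_one_right_eq_X_pow, hasseDeriv_monomial, hz]
    simp
  · intro h
    simp at h

/-- For a commutative ring `A` of prime characteristic `p`, `e ≥ 1` and `0 ≤ t < p^e`, the
`t`-th Hasse derivative is linear over `p^e`-th powers: `D_t(g^{p^e}·f) = g^{p^e}·D_t(f)`. -/
theorem hasseDeriv_pow_mul (A : Type*) [CommRing A] (p : ℕ) [Fact p.Prime] [CharP A p]
    (e : ℕ) (he : 1 ≤ e) (t : ℕ) (ht : t < p ^ e) :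
    ∀ f g : Polynomial A,
      hasseDeriv t (g ^ (p ^ e) * f) = g ^ (p ^ e) * hasseDeriv t f := by
  intro f g
  induction g using Polynomial.induction_on generalizing f with
  | C a => rw [← C_pow, ← smul_eq_C_mul, ← smul_eq_C_mul, map_smul]
  | add g h hg hh =>
    rw [add_pow_char_pow, add_mul, add_mul, map_add, hg, hh]
  | monomial n a ih =>
    rw [pow_succ, ← mul_assoc, mul_pow _ X, mul_assoc, ih, hasseDeriv_X_pow_aux A p e t ht,
      mul_assoc]
end

section
/- Let k be a field of prime characteristic p, let e ≥ 1 be an integer, let f ∈ k[x], and let J be an ideal of k[x] such that f^{p^e - 1} belongs to J^{[p^e]}, the ideal generated by the p^e-th powers of all elements of J. Then (f')^{p^e} belongs to J^{[p^e]}, where f' is the formal derivative of f. -/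
open Polynomial

theorem aux_dvd_derivative {k : Type*} [Field k] (q : ℕ) (hq : 2 ≤ q) (f : Polynomial k)
    (hf0 : f ≠ 0) (g : Polynomial k) : g ^ q ∣ f ^ (q - 1) → g ∣ derivative f := by
  induction g using UniqueFactorizationMonoid.induction_on_coprime with
  | h0 =>
    intro h
    rw [zero_pow (by omega), zero_dvd_iff] at h
    exact absurd (eq_zero_of_pow_eq_zero h) hf0
  | h1 hx => intro _; exact IsUnit.dvd hx
  | hpr i hp =>
    rename_i π
    intro h
    obtain ⟨u, hu, hnd⟩ :=
      (FiniteMultiplicity.of_prime_left hp hf0).exists_eq_pow_mul_and_not_dvd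
    set b := multiplicity π f
    have hle : i * q ≤ b * (q - 1) := by
      have h2 : π ^ (i * q) ∣ π ^ (b * (q - 1)) := by
        rw [hu, mul_pow, ← pow_mul, ← pow_mul] at h
        exact hp.pow_dvd_of_dvd_mul_right _ (fun h3 => hnd (hp.dvd_of_dvd_pow h3)) h
      exact (pow_dvd_pow_iff hp.ne_zero hp.not_unit).1 h2
    rcases Nat.eq_zero_or_pos i with rfl | hi
    · simp
    have hlt : i + 1 ≤ b := by
      by_contra hcon
      have h4 : b * (q - 1) ≤ i * (q - 1) := Nat.mul_le_mul_right _ (by omega)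
      have h5 : i * (q - 1) < i * q := Nat.mul_lt_mul_of_pos_left (by omega) hi
      omega
    have := pow_sub_one_dvd_derivative_of_pow_dvd
      ((pow_dvd_pow π hlt).trans (Dvd.intro _ hu.symm))
    simpa using this
  | hcp hxy hx hy =>
    intro h
    rw [mul_pow] at h
    exact hxy.isCoprime.mul_dvd (hx ((Dvd.intro _ rfl).trans h))
      (hy ((Dvd.intro_left _ rfl).trans h))

/-- For a field `k` of prime characteristic `p`, `e ≥ 1`, `f ∈ k[x]` and an ideal `J` with
`f^{p^e-1} ∈ J^{[p^e]}` (the ideal generated by `p^e`-th powers of elements of `J`), we have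
`(f')^{p^e} ∈ J^{[p^e]}`. -/
theorem deriv_pow_mem_frobenius_power (k : Type*) [Field k] (p : ℕ) [Fact p.Prime] [CharP k p]
    (e : ℕ) (he : 1 ≤ e) (f : Polynomial k) (J : Ideal (Polynomial k))
    (hf : f ^ (p ^ e - 1) ∈ Ideal.span ((fun a => a ^ (p ^ e)) '' (J : Set (Polynomial k)))) :
    (derivative f) ^ (p ^ e) ∈
      Ideal.span ((fun a => a ^ (p ^ e)) '' (J : Set (Polynomial k))) := by
  have hq : 2 ≤ p ^ e :=
    (Fact.out : p.Prime).two_le.trans (Nat.le_self_pow (by omega) p)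
  refine Ideal.subset_span ⟨derivative f, ?_, rfl⟩
  by_cases hf0 : f = 0
  · simp [hf0]
  obtain ⟨g, rfl⟩ := (IsPrincipalIdealRing.principal J).principal
  refine Ideal.mem_span_singleton.2 (aux_dvd_derivative (p ^ e) hq f hf0 g ?_)
  rw [← Ideal.mem_span_singleton]
  refine Ideal.span_le.2 ?_ hf
  rintro _ ⟨a, ha, rfl⟩
  exact Ideal.mem_span_singleton.2 (pow_dvd_pow_of_dvd (Ideal.mem_span_singleton.1 ha) _)
end

section
/- Let k be a field of prime characteristic p, let n ≥ 0 and e ≥ 1 be integers, let R = k[x_1, …, x_n] be the polynomial ring, let J be an ideal of R, and let g ∈ R. If g^{p^e} belongs to J^{[p^e]}, the ideal generated by the p^e-th powers of all elements of J, then g ∈ J. -/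
theorem frob_aux_split {K L : Type*} [Field K] [Field L] (F : K →+* L) :
    ∃ ψ : L →+ K, ψ 1 = 1 ∧ ∀ c d, ψ (F c * d) = c * ψ d := by
  letI := F.toAlgebra
  obtain ⟨g, hg⟩ := LinearMap.exists_leftInverse_of_injective (Algebra.linearMap K L)
    (LinearMap.ker_eq_bot.2 (algebraMap K L).injective)
  refine ⟨g.toAddMonoidHom, ?_, ?_⟩
  · have := LinearMap.congr_fun hg 1
    simpa using this
  · intro c d
    have := g.map_smul c d
    rw [Algebra.smul_def] at this
    exact this

open Classical in
theorem frob_aux_poly {σ k : Type*} [Field k] (q : ℕ) (hq : q ≠ 0) (ψ : k →+ k)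
    (h1 : ψ 1 = 1) (hψ : ∀ c d, ψ (c ^ q * d) = c * ψ d)
    (hadd : ∀ a b : MvPolynomial σ k, (a + b) ^ q = a ^ q + b ^ q) :
    ∃ φ : MvPolynomial σ k →+ MvPolynomial σ k, φ 1 = 1 ∧
      ∀ a r, φ (a ^ q * r) = a * φ r := by
  let f : (σ →₀ ℕ) → (k →+ MvPolynomial σ k) := fun m =>
    if h : ∃ m' : σ →₀ ℕ, m = q • m' then
      (MvPolynomial.monomial h.choose).toAddMonoidHom.comp ψ else 0
  have inj : ∀ a b : σ →₀ ℕ, q • a = q • b → a = b := by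
    intro a b h
    ext i
    have := DFunLike.congr_fun h i
    simpa [hq] using this
  have f1 : ∀ m c, f (q • m) c = MvPolynomial.monomial m (ψ c) := by
    intro m c
    have h : ∃ m' : σ →₀ ℕ, q • m = q • m' := ⟨m, rfl⟩
    have e : h.choose = m := (inj _ _ h.choose_spec).symm
    simp only [f, dif_pos h, e]
    rfl
  have f2 : ∀ m c, (¬ ∃ m' : σ →₀ ℕ, m = q • m') → f m c = 0 := by
    intro m c h
    simp only [f, dif_neg h]
    rfl
  let φ : MvPolynomial σ k →+ MvPolynomial σ k :=
    (Finsupp.liftAddHom f).comp AddMonoidAlgebra.coeffAddEquiv.toAddMonoidHom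
  have hφ : ∀ m c, φ (MvPolynomial.monomial m c) = f m c := fun m c =>
    Finsupp.liftAddHom_apply_single f m c
  refine ⟨φ, ?_, ?_⟩
  · have := f1 0 1
    rw [smul_zero] at this
    rw [MvPolynomial.one_def, hφ, this, h1]
  · intro a r
    induction a using MvPolynomial.induction_on' with
    | add a b ha hb => rw [hadd, add_mul, map_add, ha, hb, add_mul]
    | monomial m c =>
      induction r using MvPolynomial.induction_on' with
      | add a b ha hb => rw [mul_add, map_add, ha, hb, map_add, mul_add]
      | monomial m' d =>
        rw [MvPolynomial.monomial_pow, MvPolynomial.monomial_mul, hφ, hφ]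
        by_cases h : ∃ t : σ →₀ ℕ, m' = q • t
        · obtain ⟨t, rfl⟩ := h
          rw [← smul_add, f1, f1, MvPolynomial.monomial_mul, hψ]
        · rw [f2 m' d h, f2, mul_zero]
          rintro ⟨t, ht⟩
          apply h
          refine ⟨t - m, ?_⟩
          ext i
          have := DFunLike.congr_fun ht i
          simp only [Finsupp.add_apply, Finsupp.smul_apply, smul_eq_mul, Finsupp.tsub_apply]
            at this ⊢
          rw [Nat.mul_sub]
          omega

/-- For a field `k` of prime characteristic `p`, `R = k[x_1,…,x_n]`, an ideal `J` of `R` and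
`g ∈ R`: if `g^{p^e} ∈ J^{[p^e]}` then `g ∈ J`. -/
theorem mem_of_pow_mem_frobenius_power (k : Type*) [Field k] (p : ℕ) [Fact p.Prime] [CharP k p]
    (n : ℕ) (e : ℕ) (he : 1 ≤ e) (J : Ideal (MvPolynomial (Fin n) k))
    (g : MvPolynomial (Fin n) k)
    (hg : g ^ (p ^ e) ∈
      Ideal.span ((fun a => a ^ (p ^ e)) '' (J : Set (MvPolynomial (Fin n) k)))) :
    g ∈ J := by
  obtain ⟨ψ, h1, hψ⟩ := frob_aux_split (iterateFrobenius k p e)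
  obtain ⟨φ, hφ1, hφ⟩ := frob_aux_poly (σ := Fin n) (p ^ e)
    (pow_ne_zero _ (Fact.out : p.Prime).ne_zero) ψ h1 hψ
    (fun a b => add_pow_char_pow a b p e)
  have key : ∀ x ∈ Ideal.span ((fun a => a ^ (p ^ e)) '' (J : Set (MvPolynomial (Fin n) k))),
      φ x ∈ J := by
    intro x hx
    induction hx using Submodule.closure_induction with
    | zero => simp
    | add x y _ _ hx hy => rw [map_add]; exact J.add_mem hx hy
    | smul_mem r x hx =>
      obtain ⟨a, ha, rfl⟩ := hx
      simp only [smul_eq_mul]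
      rw [mul_comm, hφ]
      exact J.mul_mem_right _ ha
  have := key _ hg
  rw [← mul_one (g ^ (p ^ e)), hφ, hφ1, mul_one] at this
  exact this
end

section
/- Let k be a field of prime characteristic p, let e ≥ 1 be an integer, let f ∈ k[x], and let J be an ideal of k[x] such that f^{p^e - 1} belongs to J^{[p^e]}, the ideal generated by the p^e-th powers of all elements of J. Then both f and its formal derivative f' belong to J. -/
open Polynomial

theorem dvd_deriv_mul_aux {k : Type*} [Field k] (h : Polynomial k) (n : ℕ) (g : Polynomial k) :
    g ∣ h ^ n → g ∣ derivative g * h := by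
  induction g using UniqueFactorizationMonoid.induction_on_prime with
  | h₁ => intro _; simp
  | h₂ x hx => intro _; exact hx.dvd
  | h₃ a P ha hP ih =>
    intro hd
    have h1 := ih ((Dvd.intro_left P rfl).trans hd)
    have h2 : P ∣ h := hP.dvd_of_dvd_pow ((Dvd.intro a rfl).trans hd)
    rw [derivative_mul]
    obtain ⟨c, hc⟩ := h1
    obtain ⟨d, rfl⟩ := h2
    exact ⟨derivative P * d + c, by linear_combination P * hc⟩

/-- For a field `k` of prime characteristic `p`, `e ≥ 1`, `f ∈ k[x]` and an ideal `J` with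
`f^{p^e-1} ∈ J^{[p^e]}`, both `f` and `f'` belong to `J`. -/
theorem self_and_deriv_mem (k : Type*) [Field k] (p : ℕ) [Fact p.Prime] [CharP k p]
    (e : ℕ) (he : 1 ≤ e) (f : Polynomial k) (J : Ideal (Polynomial k))
    (hf : f ^ (p ^ e - 1) ∈ Ideal.span ((fun a => a ^ (p ^ e)) '' (J : Set (Polynomial k)))) :
    f ∈ J ∧ derivative f ∈ J := by
  have hq : 1 < p ^ e := Nat.one_lt_pow (by omega) (Fact.out : p.Prime).one_lt
  obtain ⟨g, rfl⟩ : ∃ g, J = Ideal.span {g} := (IsPrincipalIdealRing.principal J).principal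
  generalize p ^ e = q at *
  have hd : g ^ q ∣ f ^ (q - 1) := by
    rw [← Ideal.mem_span_singleton]
    refine Ideal.span_le.2 ?_ hf
    rintro _ ⟨a, ha, rfl⟩
    exact Ideal.mem_span_singleton.2 (pow_dvd_pow_of_dvd (Ideal.mem_span_singleton.1 ha) q)
  obtain ⟨m, rfl⟩ : ∃ m, q = m + 1 := ⟨q - 1, by omega⟩
  simp only [Nat.add_sub_cancel] at hd
  rw [Ideal.mem_span_singleton, Ideal.mem_span_singleton]
  by_cases hf0 : f = 0
  · simp [hf0]
  have hg0 : g ≠ 0 := by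
    rintro rfl
    rw [zero_pow (by omega), zero_dvd_iff] at hd
    exact hf0 (pow_eq_zero_iff (by omega) |>.1 hd)
  have hgf : g ∣ f :=
    (IsIntegrallyClosed.pow_dvd_pow_iff (n := m + 1) (by omega)).1
      (hd.trans (pow_dvd_pow f (Nat.le_succ m)))
  refine ⟨hgf, ?_⟩
  obtain ⟨h, rfl⟩ := hgf
  rw [mul_pow, pow_succ] at hd
  have h1 := dvd_deriv_mul_aux h m g ((mul_dvd_mul_iff_left (pow_ne_zero m hg0)).1 hd)
  rw [derivative_mul]
  exact dvd_add h1 (Dvd.intro _ rfl)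
end

section
/- Let k be a field of prime characteristic p, let n ≥ 0 and e ≥ 1 be integers, let R = k[x_1, …, x_n] be the polynomial ring, let f ∈ R, and let J be an ideal of R such that f^{p^e - 1} belongs to J^{[p^e]}, the ideal generated by the p^e-th powers of all elements of J. Then the Jacobian ideal Jac(f) = (f, ∂f/∂x_1, …, ∂f/∂x_n) is contained in J; that is, f ∈ J and ∂f/∂x_i ∈ J for every i. -/
open MvPolynomial

lemma exists_field_splitting {K L : Type*} [Field K] [Field L] (F : K →+* L) :
    ∃ l : L →+ K, (∀ a b, l (F a * b) = a * l b) ∧ l 1 = 1 := by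
  letI := F.toAlgebra
  obtain ⟨g, hg⟩ := LinearMap.exists_leftInverse_of_injective (Algebra.linearMap K L)
    (LinearMap.ker_eq_bot.2 (algebraMap K L).injective)
  refine ⟨g.toAddMonoidHom, fun a b => ?_, ?_⟩
  · have := g.map_smul a b
    rw [Algebra.smul_def] at this
    exact this
  · have := LinearMap.congr_fun hg 1
    simpa using this

lemma exists_splitting (k : Type*) [Field k] (p : ℕ) [Fact p.Prime] [CharP k p] (n : ℕ) :
    ∃ φ : MvPolynomial (Fin n) k →+ MvPolynomial (Fin n) k,
      (∀ a b, φ (a ^ p * b) = a * φ b) ∧ φ 1 = 1 := by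
  classical
  have hp : p ≠ 0 := (Fact.out : p.Prime).ne_zero
  obtain ⟨l, hl, hl1⟩ := exists_field_splitting (frobenius k p)
  let φ : MvPolynomial (Fin n) k →+ MvPolynomial (Fin n) k :=
    (Finsupp.liftAddHom (fun s : Fin n →₀ ℕ => if h : ∃ t, s = p • t then
      ((monomial h.choose).toAddMonoidHom.comp l :
        k →+ MvPolynomial (Fin n) k) else 0)).comp
      (basisMonomials (Fin n) k).repr.toLinearMap.toAddMonoidHom
  have hrepr : ∀ s (c : k), (basisMonomials (Fin n) k).repr (monomial s c) =
      Finsupp.single s c := by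
    intro s c
    have : monomial s c = c • (basisMonomials (Fin n) k) s := by
      simp [coe_basisMonomials, smul_monomial]
    rw [this, map_smul, Module.Basis.repr_self]; simp
  have h1 : ∀ t (c : k), φ (monomial (p • t) c) = monomial t (l c) := by
    intro t c
    have h : ∃ t', p • t = p • t' := ⟨t, rfl⟩
    have e : h.choose = t := by
      have := h.choose_spec
      ext i
      have := DFunLike.congr_fun this i
      simp only [Finsupp.smul_apply, smul_eq_mul] at this
      exact (Nat.eq_of_mul_eq_mul_left (Nat.pos_of_ne_zero hp) this).symm
    simp only [φ, AddMonoidHom.comp_apply, LinearMap.toAddMonoidHom_coe, LinearEquiv.coe_coe,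
      hrepr, Finsupp.liftAddHom_apply_single, dif_pos h, e]
  have h2 : ∀ s (c : k), (¬ ∃ t, s = p • t) → φ (monomial s c) = 0 := by
    intro s c h
    simp only [φ, AddMonoidHom.comp_apply, LinearMap.toAddMonoidHom_coe, LinearEquiv.coe_coe,
      hrepr, Finsupp.liftAddHom_apply_single, dif_neg h, AddMonoidHom.zero_apply]
  refine ⟨φ, fun a b => ?_, ?_⟩
  · induction a using MvPolynomial.induction_on' with
    | add a a' h h' => rw [add_pow_char, add_mul, map_add, h, h', add_mul]
    | monomial m c =>
      induction b using MvPolynomial.induction_on' with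
      | add b b' h h' => rw [mul_add, map_add, h, h', map_add, mul_add]
      | monomial s d =>
        rw [monomial_pow, monomial_mul]
        by_cases hs : ∃ t, s = p • t
        · obtain ⟨t, rfl⟩ := hs
          rw [← smul_add, h1, h1, monomial_mul, ← hl, frobenius_def]
        · rw [h2 s d hs, h2, mul_zero]
          rintro ⟨t, ht⟩
          refine hs ⟨t - m, ?_⟩
          ext i
          have := DFunLike.congr_fun ht i
          simp only [Finsupp.smul_apply, Finsupp.add_apply, smul_eq_mul, Finsupp.tsub_apply] at this ⊢
          rw [Nat.mul_sub]; omega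
  · have := h1 0 1
    rw [smul_zero, hl1] at this
    simpa using this

lemma iter_pderiv_monomial {k : Type*} [Field k] {n : ℕ} (i : Fin n) (s : Fin n →₀ ℕ) (c : k)
    (j : ℕ) : (pderiv i)^[j] (monomial s c) =
      monomial (s - Finsupp.single i j) (c * ((s i).descFactorial j : ℕ)) := by
  induction j with
  | zero => simp
  | succ j ih =>
    rw [Function.iterate_succ_apply', ih, pderiv_monomial, Nat.descFactorial_succ]
    congr 1
    · rw [tsub_tsub, ← Finsupp.single_add]
    · simp; ring

lemma iter_add {R : Type*} [CommRing R] (D : Derivation ℤ R R) (j : ℕ) (a b : R) :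
    D^[j] (a + b) = D^[j] a + D^[j] b := iterate_map_add D j a b

lemma iter_pderiv_p {k : Type*} [Field k] (p : ℕ) [Fact p.Prime] [CharP k p] {n : ℕ}
    (i : Fin n) (f : MvPolynomial (Fin n) k) : (pderiv i)^[p] f = 0 := by
  induction f using MvPolynomial.induction_on' with
  | add a b h h' => rw [iterate_map_add, h, h', add_zero]
  | monomial s c =>
    rw [iter_pderiv_monomial]
    have : (((s i).descFactorial p : ℕ) : k) = 0 := by
      rw [CharP.cast_eq_zero_iff k p]
      exact (Nat.dvd_factorial (Fact.out : p.Prime).pos le_rfl).trans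
        (Nat.factorial_dvd_descFactorial _ _)
    rw [this, mul_zero, monomial_zero]

/-- `(f+g)^{p-1} d(f+g) - f^{p-1} df - g^{p-1} dg` is exact. -/
lemma exact_add {k R : Type*} [CommRing k] [CommRing R] [Algebra k R] (D : Derivation k R R)
    (p : ℕ) (hp : p.Prime) (f g : R) :
    ∃ w, (f + g) ^ (p - 1) * D (f + g) = f ^ (p - 1) * D f + g ^ (p - 1) * D g + D w := by
  obtain ⟨m, rfl⟩ : ∃ m, p = m + 2 := ⟨p - 2, by have := hp.two_le; omega⟩
  -- coefficient `choose p (i+1) / p` for `i < m + 1`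
  have hc : ∀ i < m + 1, ∃ c : ℕ, (m + 2).choose (i + 1) = (m + 2) * c := fun i hi =>
    hp.dvd_choose_self (by omega) (by omega)
  choose! c hc using hc
  have hA : ∀ i < m + 1, c i * (i + 1) = (m + 1).choose i := by
    intro i hi
    have h := Nat.add_one_mul_choose_eq (m + 1) i
    rw [hc i hi] at h
    apply Nat.eq_of_mul_eq_mul_left hp.pos
    rw [← mul_assoc, ← h]
  have hB : ∀ i < m + 1, c i * (m + 1 - i) = (m + 1).choose (i + 1) := by
    intro i hi
    have h := Nat.choose_mul_succ_eq (m + 1) (i + 1)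
    rw [hc i hi] at h
    apply Nat.eq_of_mul_eq_mul_left hp.pos
    rw [show m + 1 + 1 - (i + 1) = m + 1 - i by omega] at h
    rw [← mul_assoc, ← h, mul_comm]
  refine ⟨∑ i ∈ Finset.range (m + 1), (c i : R) * (f ^ (i + 1) * g ^ (m + 1 - i)), ?_⟩
  have hD : ∀ i ∈ Finset.range (m + 1), D ((c i : R) * (f ^ (i + 1) * g ^ (m + 1 - i))) =
      (f ^ i * g ^ (m + 1 - i) * ((m + 1).choose i : ℕ)) * D f +
      (f ^ (i + 1) * g ^ (m + 1 - (i + 1)) * ((m + 1).choose (i + 1) : ℕ)) * D g := by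
    intro i hi
    have hi := Finset.mem_range.1 hi
    rw [← hA i hi, ← hB i hi]
    obtain ⟨t, rfl⟩ : ∃ t, m = i + t := ⟨m - i, by omega⟩
    rw [show i + t + 1 - i = t + 1 by omega, show i + t + 1 - (i + 1) = t by omega]
    simp only [Derivation.leibniz, Derivation.leibniz_pow, Derivation.map_natCast, smul_eq_mul,
      nsmul_eq_mul, Nat.add_sub_cancel]
    push_cast
    ring
  rw [map_sum, Finset.sum_congr rfl hD, Finset.sum_add_distrib, ← Finset.sum_mul,
    ← Finset.sum_mul, show m + 2 - 1 = m + 1 by omega, map_add, mul_add]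
  have e1 := add_pow f g (m + 1)
  have e2 := e1
  rw [Finset.sum_range_succ] at e1
  rw [Finset.sum_range_succ'] at e2
  simp only [tsub_self, pow_zero, Nat.choose_self, Nat.choose_zero_right, Nat.cast_one, mul_one,
    one_mul, tsub_zero] at e1 e2
  nth_rewrite 1 [e1]
  rw [e2]
  ring

lemma hochschild {k : Type*} [Field k] (p : ℕ) [Fact p.Prime] [CharP k p] {n : ℕ}
    (i : Fin n) (f : MvPolynomial (Fin n) k) :
    (pderiv i)^[p - 1] (f ^ (p - 1) * pderiv i f) = - (pderiv i f) ^ p := by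
  have hp : p.Prime := Fact.out
  induction f using MvPolynomial.induction_on' with
  | add a b h h' =>
    obtain ⟨w, hw⟩ := exact_add (pderiv i) p hp a b
    rw [hw, iterate_map_add, iterate_map_add, h, h', ← Function.iterate_succ_apply,
      Nat.succ_eq_add_one, Nat.sub_add_cancel hp.one_le, iter_pderiv_p, map_add, add_pow_char]
    ring
  | monomial s c =>
    rw [pderiv_monomial, monomial_pow, monomial_mul, iter_pderiv_monomial, monomial_pow]
    rcases Nat.eq_zero_or_pos (s i) with h0 | h0
    · simp [h0, hp.ne_zero]
    obtain ⟨m, rfl⟩ : ∃ m, p = m + 1 := ⟨p - 1, by have := hp.one_le; omega⟩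
    rw [← map_neg, Nat.add_sub_cancel]
    have hle : Finsupp.single i 1 ≤ s := by simpa using Nat.succ_le_of_lt h0
    obtain ⟨t, rfl⟩ := exists_add_of_le hle
    have hexp : m • (Finsupp.single i 1 + t) + (Finsupp.single i 1 + t - Finsupp.single i 1)
        - Finsupp.single i m = (m + 1) • (Finsupp.single i 1 + t - Finsupp.single i 1) := by
      rw [add_tsub_cancel_left, smul_add, Finsupp.smul_single, smul_eq_mul, mul_one, add_assoc,
        add_tsub_cancel_left, succ_nsmul]
    rw [hexp]
    refine congrArg _ ?_
    · have hfr : (((Finsupp.single i 1 + t : Fin n →₀ ℕ) i : ℕ) : k) ^ (m + 1) =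
          (((Finsupp.single i 1 + t : Fin n →₀ ℕ) i : ℕ) : k) := by
        rw [← frobenius_def, map_natCast]
      rw [mul_pow, hfr]
      have hd : (((m • (Finsupp.single i 1 + t) + (Finsupp.single i 1 + t - Finsupp.single i 1)
          : Fin n →₀ ℕ) i).descFactorial m : k) = -1 := by
        have e : (m • (Finsupp.single i 1 + t) + (Finsupp.single i 1 + t - Finsupp.single i 1)
          : Fin n →₀ ℕ) i = (m + 1) * t i + m := by simp; ring
        rw [e]
        have w : (((m + 1) * t i + m).descFactorial m : ZMod (m + 1)) = -1 := by
          have h3 := ZMod.wilsons_lemma (m + 1)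
          rw [Nat.add_sub_cancel, ← Nat.descFactorial_self] at h3
          rw [← h3, Nat.descFactorial_eq_prod_range, Nat.descFactorial_eq_prod_range]
          push_cast
          refine Finset.prod_congr rfl fun j hj => ?_
          have := Finset.mem_range.1 hj
          rw [Nat.add_sub_assoc this.le, Nat.cast_add, Nat.cast_mul, CharP.cast_eq_zero, zero_mul,
            zero_add]
        have := congrArg (ZMod.castHom (dvd_refl (m + 1)) k) w
        simpa using this
      rw [hd]
      ring

lemma iter_const_mul {k R : Type*} [CommRing k] [CommRing R] [Algebra k R] (D : Derivation k R R)
    (p : ℕ) [CharP R p] (a g : R) (j : ℕ) : D^[j] (a ^ p * g) = a ^ p * D^[j] g := by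
  induction j with
  | zero => rfl
  | succ j ih =>
    rw [Function.iterate_succ_apply', ih, Function.iterate_succ_apply', Derivation.leibniz,
      Derivation.leibniz_pow]
    simp [← Nat.cast_smul_eq_nsmul R]

lemma iter_mem {k R : Type*} [CommRing k] [CommRing R] [Algebra k R] (D : Derivation k R R)
    (p : ℕ) [CharP R p] (J : Ideal R) (q : ℕ) (g : R) (j : ℕ)
    (hg : g ∈ Ideal.span ((fun a => a ^ (q * p)) '' (J : Set R))) :
    D^[j] g ∈ Ideal.span ((fun a => a ^ (q * p)) '' (J : Set R)) := by
  refine Submodule.span_induction (p := fun g _ => ∀ r, D^[j] (r * g) ∈ _) ?_ ?_ ?_ ?_ hg 1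
    |> fun h => by simpa using h
  · rintro _ ⟨a, ha, rfl⟩ r
    simp only [pow_mul, mul_comm r]
    rw [iter_const_mul]
    refine Ideal.mul_mem_right _ _ (Ideal.subset_span ⟨a, ha, ?_⟩)
    simp [pow_mul]
  · intro r; simp [iterate_map_zero]
  · intro x y _ _ hx hy r
    rw [mul_add, iterate_map_add]
    exact Ideal.add_mem _ (hx r) (hy r)
  · intro b x _ hx r
    rw [smul_eq_mul, ← mul_assoc]
    exact hx _

lemma descent {k : Type*} [Field k] (p : ℕ) [Fact p.Prime] [CharP k p] {n : ℕ}
    (J : Ideal (MvPolynomial (Fin n) k)) (q : ℕ) (h : MvPolynomial (Fin n) k)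
    (hh : h ^ p ∈ Ideal.span ((fun a => a ^ (q * p)) '' (J : Set (MvPolynomial (Fin n) k)))) :
    h ∈ Ideal.span ((fun a => a ^ q) '' (J : Set (MvPolynomial (Fin n) k))) := by
  obtain ⟨φ, hφ, hφ1⟩ := exists_splitting k p n
  have key : ∀ g ∈ Ideal.span ((fun a => a ^ (q * p)) '' (J : Set (MvPolynomial (Fin n) k))),
      ∀ r, φ (r * g) ∈ Ideal.span ((fun a => a ^ q) '' (J : Set (MvPolynomial (Fin n) k))) := by
    intro g hg
    induction hg using Submodule.span_induction with
    | mem x hx =>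
      obtain ⟨a, ha, rfl⟩ := hx
      intro r
      simp only [pow_mul, mul_comm r]
      rw [hφ]
      exact Ideal.mul_mem_right _ _ (Ideal.subset_span ⟨a, ha, rfl⟩)
    | zero => intro r; simp
    | add x y _ _ hx hy =>
      intro r
      rw [mul_add, map_add]
      exact Ideal.add_mem _ (hx r) (hy r)
    | smul b x _ hx =>
      intro r
      rw [smul_eq_mul, ← mul_assoc]
      exact hx _
  have := key _ hh 1
  rwa [one_mul, ← mul_one (h ^ p), hφ, hφ1, mul_one] at this

lemma span_pow_one {R : Type*} [CommRing R] (J : Ideal R) :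
    Ideal.span ((fun a => a ^ 1) '' (J : Set R)) = J := by
  simp

/-- Main theorem: for a field `k` of prime characteristic `p`, `R = k[x_1,…,x_n]`, `f ∈ R` and
an ideal `J` with `f^{p^e-1} ∈ J^{[p^e]}`, the Jacobian ideal
`Jac(f) = (f, ∂f/∂x_1, …, ∂f/∂x_n)` is contained in `J`. -/
theorem jacobian_subset (k : Type*) [Field k] (p : ℕ) [Fact p.Prime] [CharP k p]
    (n : ℕ) (e : ℕ) (he : 1 ≤ e) (f : MvPolynomial (Fin n) k)
    (J : Ideal (MvPolynomial (Fin n) k))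
    (hf : f ^ (p ^ e - 1) ∈
      Ideal.span ((fun a => a ^ (p ^ e)) '' (J : Set (MvPolynomial (Fin n) k)))) :
    f ∈ J ∧ ∀ i : Fin n, MvPolynomial.pderiv i f ∈ J := by
  have hp : p.Prime := Fact.out
  constructor
  · have h1 := Ideal.mul_mem_right f _ hf
    rw [← pow_succ, Nat.sub_add_cancel (Nat.one_le_pow _ _ hp.pos)] at h1
    clear hf he
    induction e with
    | zero => rwa [pow_zero, pow_one, span_pow_one] at h1
    | succ e ih =>
      rw [pow_succ, pow_mul] at h1
      exact ih (descent p J _ _ h1)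
  · intro i
    have h1 := Ideal.mul_mem_right (pderiv i f) _ hf
    clear hf he
    induction e with
    | zero => rwa [pow_zero, span_pow_one, Nat.sub_self, pow_zero, one_mul] at h1
    | succ e ih =>
      rw [pow_succ] at h1
      refine ih (descent p J _ _ ?_)
      have h2 := iter_mem (pderiv i) p J _ _ (p - 1) h1
      have e1 : p ^ e * p - 1 = (p ^ e - 1) * p + (p - 1) := by
        have := Nat.one_le_pow e p hp.pos
        obtain ⟨t, ht⟩ : ∃ t, p ^ e = t + 1 := ⟨p ^ e - 1, by omega⟩
        have := hp.one_le
        rw [ht, Nat.add_sub_cancel, add_mul]; omega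
      rw [e1, pow_add, pow_mul, mul_assoc, iter_const_mul, hochschild, mul_neg,
        ← mul_pow] at h2
      exact (Ideal.neg_mem_iff _).1 h2
end
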